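/- arXiv:2308.05757 — 6 statements merged into one kernel-verified Lean document; each statement's English description precedes it below -/
import Mathlib

section
/- Let S be a nonempty finite set of jobs with nonnegative processing times t : S → ℝ, and let m ≥ 1 be a number of machines. Then there exists an assignment f : S → Fin m such that for every machine j, the total load Σ_{i ∈ S, f(i) = j} t(i) is at most (Σ_{i ∈ S} t(i))/m + max_{i ∈ S} t(i). -/
theorem greedy_aux {α : Type*} [DecidableEq α] (t : α → ℝ) (M : ℝ) (hM : 0 ≤ M)
    (m : ℕ) (hm : 1 ≤ m) (S : Finset α) :
    (∀ i ∈ S, 0 ≤ t i ∧ t i ≤ M) → ∃ f : α → Fin m, ∀ j : Fin m,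
      ∑ i ∈ S.filter (fun i => f i = j), t i ≤ (∑ i ∈ S, t i) / m + M := by
  have hm0 : (0 : ℝ) < m := by exact_mod_cast hm
  have : Nonempty (Fin m) := ⟨⟨0, hm⟩⟩
  induction S using Finset.induction_on with
  | empty => intro _; exact ⟨fun _ => ⟨0, hm⟩, fun j => by simpa using hM⟩
  | insert a s ha ih =>
    intro h
    obtain ⟨f, hf⟩ := ih fun i hi => h i (Finset.mem_insert_of_mem hi)
    obtain ⟨h0, h1⟩ := h a (Finset.mem_insert_self a s)
    obtain ⟨k, hk⟩ := Finite.exists_min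
      (fun j : Fin m => ∑ i ∈ s.filter (fun i => f i = j), t i)
    have hsum : ∑ j : Fin m, ∑ i ∈ s.filter (fun i => f i = j), t i = ∑ i ∈ s, t i :=
      Finset.sum_fiberwise s f t
    have hk' : ∑ i ∈ s.filter (fun i => f i = k), t i ≤ (∑ i ∈ s, t i) / m := by
      rw [le_div_iff₀ hm0, ← hsum]
      have := Finset.card_nsmul_le_sum Finset.univ _ _ (fun j _ => hk j)
      simp only [Finset.card_univ, Fintype.card_fin, nsmul_eq_mul] at this
      linarith
    have hmono : (∑ i ∈ s, t i) / m ≤ (∑ i ∈ insert a s, t i) / m := by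
      rw [Finset.sum_insert ha]
      gcongr
      linarith
    refine ⟨Function.update f a k, fun j => ?_⟩
    have he : s.filter (fun i => Function.update f a k i = j) = s.filter (fun i => f i = j) := by
      apply Finset.filter_congr
      intro i hi
      rw [Function.update_of_ne (show i ≠ a from fun e => ha (e ▸ hi))]
    rw [Finset.filter_insert, he, Function.update_self]
    split_ifs with hj
    · subst hj
      rw [Finset.sum_insert (by simp [ha])]
      linarith
    · linarith [hf j]

/-- Graham-type upper bound: for a nonempty finite set of jobs `S` with nonnegative
processing times `t` and `m ≥ 1` machines, there exists an assignment `f : α → Fin m`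
such that every machine's load is at most the average load plus the maximum job time. -/
theorem exists_assignment_load_le_avg_add_max
    {α : Type*} [DecidableEq α] (S : Finset α) (hS : S.Nonempty)
    (t : α → ℝ) (ht : ∀ i ∈ S, 0 ≤ t i) (m : ℕ) (hm : 1 ≤ m) :
    ∃ f : α → Fin m, ∀ j : Fin m,
      ∑ i ∈ S.filter (fun i => f i = j), t i ≤ (∑ i ∈ S, t i) / m + S.sup' hS t := by
  obtain ⟨a, ha⟩ := id hS
  exact greedy_aux t _ ((ht a ha).trans (Finset.le_sup' t ha)) m hm S
    fun i hi => ⟨ht i hi, Finset.le_sup' t hi⟩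
end

section
/- Let K be a finite set, D : K → ℝ a nonnegative function, and 𝒟 ∈ ℝ. Let G* ⊆ K satisfy Σ_{i ∈ G*} D(i) ≥ 𝒟 (feasibility), and let δ ⊆ K satisfy Σ_{i ∈ δ} D(i) ≤ 𝒟. Then 𝒟 − Σ_{i ∈ δ} D(i) ≤ Σ_{i ∈ G* \ δ} min(D(i), 𝒟 − Σ_{i' ∈ δ} D(i')). -/
/-- Validity of the knapsack-cover inequality: if `G* ⊆ K` is feasible
(`∑_{i ∈ G*} D i ≥ 𝒟`) and `δ ⊆ K` satisfies `∑_{i ∈ δ} D i ≤ 𝒟`, then the residual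
requirement `𝒟 - D(δ)` is at most the sum of truncated sizes over `G* \ δ`. -/
theorem knapsack_cover_valid
    {α : Type*} [DecidableEq α] (K : Finset α) (D : α → ℝ)
    (hD : ∀ i ∈ K, 0 ≤ D i) (𝒟 : ℝ)
    (Gstar : Finset α) (hGK : Gstar ⊆ K) (hfeas : 𝒟 ≤ ∑ i ∈ Gstar, D i)
    (δ : Finset α) (hδK : δ ⊆ K) (hδD : ∑ i ∈ δ, D i ≤ 𝒟) :
    𝒟 - ∑ i ∈ δ, D i ≤ ∑ i ∈ Gstar \ δ, min (D i) (𝒟 - ∑ i' ∈ δ, D i') := by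
  have hnn : ∀ i ∈ Gstar \ δ, 0 ≤ min (D i) (𝒟 - ∑ i' ∈ δ, D i') := fun i hi =>
    le_min (hD i (hGK (Finset.mem_sdiff.mp hi).1)) (sub_nonneg.mpr hδD)
  by_cases h : ∃ i ∈ Gstar \ δ, 𝒟 - ∑ i' ∈ δ, D i' ≤ D i
  · obtain ⟨i, hi, hle⟩ := h
    have h1 := Finset.single_le_sum hnn hi
    rwa [min_eq_right hle] at h1
  · push Not at h
    have h2 : ∑ i ∈ Gstar \ δ, min (D i) (𝒟 - ∑ i' ∈ δ, D i') = ∑ i ∈ Gstar \ δ, D i :=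
      Finset.sum_congr rfl fun i hi => min_eq_left (h i hi).le
    have h3 : ∑ i ∈ Gstar, D i ≤ ∑ i ∈ Gstar ∪ δ, D i :=
      Finset.sum_le_sum_of_subset_of_nonneg Finset.subset_union_left fun i hi _ =>
        hD i (Finset.union_subset hGK hδK hi)
    have h4 : ∑ i ∈ Gstar ∪ δ, D i = ∑ i ∈ Gstar \ δ, D i + ∑ i ∈ δ, D i := by
      rw [← Finset.sum_union Finset.sdiff_disjoint, Finset.sdiff_union_self_eq_union]
    rw [h2]
    linarith
end

section
/- Let K be a finite set, D : K → ℝ a nonnegative function, and 𝒟 ∈ ℝ. Let G' ⊆ K and i_l ∈ G' be such that Σ_{i ∈ G' \ {i_l}} D(i) < 𝒟, and let δ ⊆ G' \ {i_l}. Then Σ_{i ∈ G' \ δ} min(D(i), 𝒟 − Σ_{i' ∈ δ} D(i')) < 2·(𝒟 − Σ_{i' ∈ δ} D(i')). -/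
/-- Bound on truncated sizes of the greedily selected devices: if `G' ⊆ K` with last
device `i_l ∈ G'` satisfies `∑_{i ∈ G' \ {i_l}} D i < 𝒟`, then for any
`δ ⊆ G' \ {i_l}` the sum of truncated sizes over `G' \ δ` is strictly less than twice
the residual requirement `𝒟 - D(δ)`. -/
theorem truncated_sizes_lt_two_residual
    {α : Type*} [DecidableEq α] (K : Finset α) (D : α → ℝ)
    (hD : ∀ i ∈ K, 0 ≤ D i) (𝒟 : ℝ)
    (G' : Finset α) (hG'K : G' ⊆ K) (il : α) (hil : il ∈ G')
    (hlt : ∑ i ∈ G'.erase il, D i < 𝒟)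
    (δ : Finset α) (hδ : δ ⊆ G'.erase il) :
    ∑ i ∈ G' \ δ, min (D i) (𝒟 - ∑ i' ∈ δ, D i') <
      2 * (𝒟 - ∑ i' ∈ δ, D i') := by
  have hnot : il ∉ δ := fun h => (Finset.mem_erase.mp (hδ h)).1 rfl
  have hmem : il ∈ G' \ δ := Finset.mem_sdiff.mpr ⟨hil, hnot⟩
  have hset : (G' \ δ).erase il = G'.erase il \ δ := by
    ext x
    simp only [Finset.mem_erase, Finset.mem_sdiff]
    tauto
  have h1 := Finset.add_sum_erase (G' \ δ) (fun i => min (D i) (𝒟 - ∑ i' ∈ δ, D i')) hmem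
  have h2 := Finset.sum_sdiff (f := D) hδ
  have h3 : ∑ i ∈ (G' \ δ).erase il, min (D i) (𝒟 - ∑ i' ∈ δ, D i')
      ≤ ∑ i ∈ G'.erase il \ δ, D i := by
    rw [hset]
    exact Finset.sum_le_sum fun i _ => min_le_left _ _
  have h4 := min_le_right (D il) (𝒟 - ∑ i' ∈ δ, D i')
  linarith
end

section
/- Let K be a finite set, D : K → ℝ a nonnegative function, 𝒟 ∈ ℝ, and ĉ : K → ℝ. Let y assign a nonnegative real y_δ to each subset δ ⊆ K, with y_δ = 0 whenever Σ_{i ∈ δ} D(i) > 𝒟. Suppose that for every i ∈ K, Σ_{δ ⊆ K, i ∉ δ} y_δ · min(D(i), 𝒟 − Σ_{i' ∈ δ} D(i')) ≤ ĉ(i) (dual feasibility). Then for every G* ⊆ K with Σ_{i ∈ G*} D(i) ≥ 𝒟, it holds that Σ_{δ ⊆ K} y_δ · (𝒟 − Σ_{i ∈ δ} D(i)) ≤ Σ_{i ∈ G*} ĉ(i). -/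
/-- Weak duality for the knapsack-cover LP: if `y` is a nonnegative dual solution
supported on non-covering subsets of `K` and dual-feasible with respect to the costs
`ĉ`, then `∑_δ y_δ R(δ)` lower-bounds the total cost of any feasible set `G*`. -/
theorem dual_weak_duality
    {α : Type*} [DecidableEq α] (K : Finset α) (D : α → ℝ)
    (hD : ∀ i ∈ K, 0 ≤ D i) (𝒟 : ℝ) (chat : α → ℝ)
    (y : Finset α → ℝ)
    (hy : ∀ δ ∈ K.powerset, 0 ≤ y δ)
    (hy0 : ∀ δ ∈ K.powerset, 𝒟 < ∑ i ∈ δ, D i → y δ = 0)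
    (hdual : ∀ i ∈ K,
      ∑ δ ∈ K.powerset.filter (fun δ => i ∉ δ),
        y δ * min (D i) (𝒟 - ∑ i' ∈ δ, D i') ≤ chat i)
    (Gstar : Finset α) (hGK : Gstar ⊆ K) (hfeas : 𝒟 ≤ ∑ i ∈ Gstar, D i) :
    ∑ δ ∈ K.powerset, y δ * (𝒟 - ∑ i ∈ δ, D i) ≤ ∑ i ∈ Gstar, chat i := by
  have key : ∀ δ ∈ K.powerset, y δ * (𝒟 - ∑ i ∈ δ, D i) ≤
      ∑ i ∈ Gstar, if i ∉ δ then y δ * min (D i) (𝒟 - ∑ i' ∈ δ, D i') else 0 := by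
    intro δ hδ
    rcases lt_or_ge 𝒟 (∑ i ∈ δ, D i) with h | h
    · simp [hy0 δ hδ h]
    have hδK : δ ⊆ K := Finset.mem_powerset.mp hδ
    rw [← Finset.sum_filter, ← Finset.mul_sum]
    apply mul_le_mul_of_nonneg_left _ (hy δ hδ)
    by_cases hex : ∃ i ∈ Gstar.filter (fun i => i ∉ δ), 𝒟 - ∑ i ∈ δ, D i ≤ D i
    · obtain ⟨i, hi, hle⟩ := hex
      have hs := Finset.single_le_sum
        (f := fun i => min (D i) (𝒟 - ∑ i' ∈ δ, D i'))
        (fun j hj => le_min (hD j (hGK (Finset.mem_filter.mp hj).1)) (sub_nonneg.mpr h)) hi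
      simp only [min_eq_right hle] at hs
      exact hs
    · push Not at hex
      rw [Finset.sum_congr rfl (fun i hi => min_eq_left (hex i hi).le)]
      have h1 := Finset.sum_filter_add_sum_filter_not Gstar (fun i => i ∉ δ) D
      have h2 : ∑ i ∈ Gstar.filter (fun i => ¬ i ∉ δ), D i ≤ ∑ i ∈ δ, D i := by
        apply Finset.sum_le_sum_of_subset_of_nonneg
        · intro i hi
          exact not_not.mp (Finset.mem_filter.mp hi).2
        · intro i hi _
          exact hD i (hδK hi)
      linarith
  refine (Finset.sum_le_sum key).trans ?_
  rw [Finset.sum_comm]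
  apply Finset.sum_le_sum
  intro i hi
  rw [← Finset.sum_filter]
  exact hdual i (hGK hi)
end

section
/- Let K be a finite set, D : K → ℝ a nonnegative function, 𝒟 ∈ ℝ, and ĉ : K → ℝ a nonnegative function. Let G' ⊆ K and i_l ∈ G' satisfy Σ_{i ∈ G'} D(i) ≥ 𝒟 and Σ_{i ∈ G' \ {i_l}} D(i) < 𝒟. Let y assign a nonnegative real y_δ to each subset δ ⊆ K, with y_δ = 0 unless δ ⊆ G' \ {i_l}. Suppose (i) for every i ∈ G', ĉ(i) = Σ_{δ ⊆ K, i ∉ δ} y_δ · min(D(i), 𝒟 − Σ_{i' ∈ δ} D(i')) (tightness on selected devices), and (ii) for every i ∈ K, Σ_{δ ⊆ K, i ∉ δ} y_δ · min(D(i), 𝒟 − Σ_{i' ∈ δ} D(i')) ≤ ĉ(i) (dual feasibility). Then for every G* ⊆ K with Σ_{i ∈ G*} D(i) ≥ 𝒟, it holds that Σ_{i ∈ G'} ĉ(i) ≤ 2 · Σ_{i ∈ G*} ĉ(i). -/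
/-- Primal-dual bound (inequality (3) of Theorem 1): if `G' ⊆ K` is the feasible set
produced by the greedy run with last added device `i_l`, and `y` is a nonnegative dual
solution supported on subsets of `G' \ {i_l}` that is dual-feasible and tight on every
selected device, then the cost of `G'` is at most twice the cost of any feasible `G*`. -/
theorem greedy_cost_le_two_opt
    {α : Type*} [DecidableEq α] (K : Finset α) (D : α → ℝ)
    (hD : ∀ i ∈ K, 0 ≤ D i) (𝒟 : ℝ)
    (chat : α → ℝ) (hchat : ∀ i ∈ K, 0 ≤ chat i)
    (G' : Finset α) (hG'K : G' ⊆ K) (il : α) (hil : il ∈ G')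
    (hfeasG' : 𝒟 ≤ ∑ i ∈ G', D i) (hlt : ∑ i ∈ G'.erase il, D i < 𝒟)
    (y : Finset α → ℝ)
    (hy : ∀ δ ∈ K.powerset, 0 ≤ y δ)
    (hsupp : ∀ δ ∈ K.powerset, ¬ δ ⊆ G'.erase il → y δ = 0)
    (htight : ∀ i ∈ G',
      chat i = ∑ δ ∈ K.powerset.filter (fun δ => i ∉ δ),
        y δ * min (D i) (𝒟 - ∑ i' ∈ δ, D i'))
    (hdual : ∀ i ∈ K,
      ∑ δ ∈ K.powerset.filter (fun δ => i ∉ δ),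
        y δ * min (D i) (𝒟 - ∑ i' ∈ δ, D i') ≤ chat i)
    (Gstar : Finset α) (hGK : Gstar ⊆ K) (hfeas : 𝒟 ≤ ∑ i ∈ Gstar, D i) :
    ∑ i ∈ G', chat i ≤ 2 * ∑ i ∈ Gstar, chat i := by
  have swap : ∀ S : Finset α,
      ∑ i ∈ S, ∑ δ ∈ K.powerset.filter (fun δ => i ∉ δ),
        y δ * min (D i) (𝒟 - ∑ i' ∈ δ, D i') =
      ∑ δ ∈ K.powerset, y δ * ∑ i ∈ S \ δ, min (D i) (𝒟 - ∑ i' ∈ δ, D i') := by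
    intro S
    simp_rw [Finset.mul_sum]
    apply Finset.sum_comm'
    intro i δ
    simp only [Finset.mem_filter, Finset.mem_sdiff]
    tauto
  have h1 : ∑ i ∈ G', chat i =
      ∑ δ ∈ K.powerset, y δ * ∑ i ∈ G' \ δ, min (D i) (𝒟 - ∑ i' ∈ δ, D i') := by
    rw [← swap]
    exact Finset.sum_congr rfl htight
  have h2 : ∑ δ ∈ K.powerset, y δ * ∑ i ∈ Gstar \ δ, min (D i) (𝒟 - ∑ i' ∈ δ, D i') ≤
      ∑ i ∈ Gstar, chat i := by
    rw [← swap]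
    exact Finset.sum_le_sum fun i hi => hdual i (hGK hi)
  have h3 : ∑ δ ∈ K.powerset, y δ * ∑ i ∈ G' \ δ, min (D i) (𝒟 - ∑ i' ∈ δ, D i') ≤
      2 * ∑ δ ∈ K.powerset, y δ * ∑ i ∈ Gstar \ δ, min (D i) (𝒟 - ∑ i' ∈ δ, D i') := by
    rw [Finset.mul_sum]
    apply Finset.sum_le_sum
    intro δ hδ
    by_cases hs : δ ⊆ G'.erase il
    swap
    · simp [hsupp δ hδ hs]
    have hδK : δ ⊆ K := Finset.mem_powerset.mp hδ
    have hsplit : ∑ i ∈ G'.erase il \ δ, D i + ∑ i ∈ δ, D i = ∑ i ∈ G'.erase il, D i :=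
      Finset.sum_sdiff hs
    have hn : 0 ≤ ∑ i ∈ G'.erase il \ δ, D i := Finset.sum_nonneg fun i hi =>
      hD i (hG'K (Finset.mem_of_mem_erase (Finset.mem_sdiff.mp hi).1))
    set R := 𝒟 - ∑ i' ∈ δ, D i' with hR
    have hRpos : 0 < R := by linarith
    have hilδ : il ∉ δ := fun h => Finset.notMem_erase il G' (hs h)
    have hA : ∑ i ∈ G' \ δ, min (D i) R ≤ 2 * R := by
      have e : il ∈ G' \ δ := Finset.mem_sdiff.mpr ⟨hil, hilδ⟩
      rw [← Finset.add_sum_erase _ _ e]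
      have e2 : (G' \ δ).erase il = G'.erase il \ δ := by
        ext x
        simp only [Finset.mem_erase, Finset.mem_sdiff]
        tauto
      rw [e2]
      have a1 : ∑ i ∈ G'.erase il \ δ, min (D i) R ≤ ∑ i ∈ G'.erase il \ δ, D i :=
        Finset.sum_le_sum fun i _ => min_le_left _ _
      have a2 : min (D il) R ≤ R := min_le_right _ _
      linarith
    have hB : R ≤ ∑ i ∈ Gstar \ δ, min (D i) R := by
      have hnn : ∀ i ∈ Gstar \ δ, 0 ≤ min (D i) R := fun i hi =>
        le_min (hD i (hGK (Finset.mem_sdiff.mp hi).1)) hRpos.le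
      by_cases hex : ∃ i ∈ Gstar \ δ, R ≤ D i
      · obtain ⟨i, hi, hle⟩ := hex
        calc R = min (D i) R := (min_eq_right hle).symm
          _ ≤ _ := Finset.single_le_sum hnn hi
      · push Not at hex
        have b1 : ∑ i ∈ Gstar \ δ, min (D i) R = ∑ i ∈ Gstar \ δ, D i :=
          Finset.sum_congr rfl fun i hi => min_eq_left (hex i hi).le
        have b2 : ∑ i ∈ Gstar, D i ≤ ∑ i ∈ Gstar ∪ δ, D i :=
          Finset.sum_le_sum_of_subset_of_nonneg Finset.subset_union_left
            fun i hi _ => hD i (Finset.union_subset hGK hδK hi)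
        have b3 : ∑ i ∈ Gstar \ δ, D i + ∑ i ∈ δ, D i = ∑ i ∈ Gstar ∪ δ, D i := by
          rw [← Finset.sum_union Finset.sdiff_disjoint, Finset.sdiff_union_self_eq_union]
        linarith
    have hyδ := hy δ hδ
    calc y δ * ∑ i ∈ G' \ δ, min (D i) R
        ≤ y δ * (2 * ∑ i ∈ Gstar \ δ, min (D i) R) :=
          mul_le_mul_of_nonneg_left (by linarith) hyδ
      _ = _ := by ring
  linarith
end

section
/- Let K be a finite set, D : K → ℝ a nonnegative function, 𝒟 ∈ ℝ, and let c, t : K → ℝ be nonnegative functions, α, β ≥ 0 real numbers, and m ≥ 1 a number of channels. Define ĉ(i) = α·c(i) + β·t(i)/m for i ∈ K. Let G' ⊆ K be nonempty and i_l ∈ G' satisfy Σ_{i ∈ G'} D(i) ≥ 𝒟 and Σ_{i ∈ G' \ {i_l}} D(i) < 𝒟. Let y assign a nonnegative real y_δ to each subset δ ⊆ K, with y_δ = 0 unless δ ⊆ G' \ {i_l}, such that (i) for every i ∈ G', ĉ(i) = Σ_{δ ⊆ K, i ∉ δ} y_δ · min(D(i), 𝒟 − Σ_{i' ∈ δ}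 D(i')), and (ii) for every i ∈ K, Σ_{δ ⊆ K, i ∉ δ} y_δ · min(D(i), 𝒟 − Σ_{i' ∈ δ} D(i')) ≤ ĉ(i). Let G* ⊆ K be nonempty with Σ_{i ∈ G*} D(i) ≥ 𝒟, and let τ* ∈ ℝ satisfy τ* ≥ (Σ_{i ∈ G*} t(i))/m and τ* ≥ max_{i ∈ G'} t(i). Then α·Σ_{i ∈ G'} c(i) + β·((Σ_{i ∈ G'} t(i))/m + max_{i ∈ G'} t(i)) ≤ 3·(α·Σ_{i ∈ G*} c(i) + β·τ*). -/
/-- First case of Theorem 1: with modified costs `ĉ(i) = α c(i) + β t(i)/m`, a greedily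
selected feasible set `G'` (with last device `i_l` and duals `y`), and an optimal
feasible set `G*` whose upload completion time `τ*` is at least both the average load
of `G*` and the maximum upload time in `G'`, the training cost of `G'`, bounded via the
Graham scheduling bound, is at most 3 times the optimal training cost. -/
theorem orcoDCS_three_approx_first_case
    {ι : Type*} [DecidableEq ι] (K : Finset ι) (D : ι → ℝ)
    (hD : ∀ i ∈ K, 0 ≤ D i) (𝒟 : ℝ)
    (c t : ι → ℝ) (hc : ∀ i ∈ K, 0 ≤ c i) (ht : ∀ i ∈ K, 0 ≤ t i)
    (a b : ℝ) (ha : 0 ≤ a) (hb : 0 ≤ b)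
    (m : ℕ) (hm : 1 ≤ m)
    (chat : ι → ℝ) (hchat : ∀ i, chat i = a * c i + b * t i / m)
    (G' : Finset ι) (hG'ne : G'.Nonempty) (hG'K : G' ⊆ K)
    (il : ι) (hil : il ∈ G')
    (hfeasG' : 𝒟 ≤ ∑ i ∈ G', D i) (hlt : ∑ i ∈ G'.erase il, D i < 𝒟)
    (y : Finset ι → ℝ)
    (hy : ∀ δ ∈ K.powerset, 0 ≤ y δ)
    (hsupp : ∀ δ ∈ K.powerset, ¬ δ ⊆ G'.erase il → y δ = 0)
    (htight : ∀ i ∈ G',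
      chat i = ∑ δ ∈ K.powerset.filter (fun δ => i ∉ δ),
        y δ * min (D i) (𝒟 - ∑ i' ∈ δ, D i'))
    (hdual : ∀ i ∈ K,
      ∑ δ ∈ K.powerset.filter (fun δ => i ∉ δ),
        y δ * min (D i) (𝒟 - ∑ i' ∈ δ, D i') ≤ chat i)
    (Gstar : Finset ι) (hGne : Gstar.Nonempty) (hGK : Gstar ⊆ K)
    (hfeas : 𝒟 ≤ ∑ i ∈ Gstar, D i)
    (τstar : ℝ)
    (hτ1 : (∑ i ∈ Gstar, t i) / m ≤ τstar)
    (hτ2 : G'.sup' hG'ne t ≤ τstar) :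
    a * ∑ i ∈ G', c i + b * ((∑ i ∈ G', t i) / m + G'.sup' hG'ne t) ≤
      3 * (a * ∑ i ∈ Gstar, c i + b * τstar) := by
  have hswap : ∀ G : Finset ι, ∑ i ∈ G, ∑ δ ∈ K.powerset.filter (fun δ => i ∉ δ),
        y δ * min (D i) (𝒟 - ∑ i' ∈ δ, D i') =
      ∑ δ ∈ K.powerset, y δ * ∑ i ∈ G \ δ, min (D i) (𝒟 - ∑ i' ∈ δ, D i') := by
    intro G
    simp_rw [Finset.mul_sum]
    apply Finset.sum_comm'
    intro x δ
    simp only [Finset.mem_filter, Finset.mem_sdiff]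
    tauto
  have hchatsum : ∀ G : Finset ι, ∑ i ∈ G, chat i =
      a * ∑ i ∈ G, c i + b * ((∑ i ∈ G, t i) / m) := by
    intro G
    simp_rw [hchat, Finset.sum_add_distrib, Finset.mul_sum, Finset.sum_div, Finset.mul_sum,
      mul_div_assoc]
  have hkey : ∑ i ∈ G', chat i ≤ 2 * ∑ i ∈ Gstar, chat i := by
    have h1 : ∑ i ∈ G', chat i =
        ∑ δ ∈ K.powerset, y δ * ∑ i ∈ G' \ δ, min (D i) (𝒟 - ∑ i' ∈ δ, D i') := by
      rw [← hswap]
      exact Finset.sum_congr rfl htight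
    have h2 : ∑ δ ∈ K.powerset, y δ * ∑ i ∈ Gstar \ δ, min (D i) (𝒟 - ∑ i' ∈ δ, D i') ≤
        ∑ i ∈ Gstar, chat i := by
      rw [← hswap]
      exact Finset.sum_le_sum fun i hi => hdual i (hGK hi)
    refine le_trans ?_ (mul_le_mul_of_nonneg_left h2 (by norm_num))
    rw [h1, Finset.mul_sum]
    refine Finset.sum_le_sum fun δ hδ => ?_
    by_cases hs : δ ⊆ G'.erase il
    swap
    · simp [hsupp δ hδ hs]
    have hDE : ∑ i ∈ (G'.erase il) \ δ, D i + ∑ i ∈ δ, D i = ∑ i ∈ G'.erase il, D i :=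
      Finset.sum_sdiff hs
    have hnn : 0 ≤ ∑ i ∈ (G'.erase il) \ δ, D i := Finset.sum_nonneg fun i hi =>
      hD i (hG'K (Finset.mem_of_mem_erase (Finset.mem_sdiff.1 hi).1))
    have hδK : δ ⊆ K := Finset.mem_powerset.1 hδ
    have hilδ : il ∉ δ := fun h => Finset.notMem_erase il G' (hs h)
    obtain ⟨R, hR⟩ : ∃ R, R = 𝒟 - ∑ i' ∈ δ, D i' := ⟨_, rfl⟩
    rw [← hR]
    have hRpos : 0 < R := by linarith
    have hup : ∑ i ∈ G' \ δ, min (D i) R ≤ 2 * R := by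
      have hmem : il ∈ G' \ δ := Finset.mem_sdiff.2 ⟨hil, hilδ⟩
      rw [← Finset.add_sum_erase _ _ hmem]
      have he : (G' \ δ).erase il = (G'.erase il) \ δ := by
        ext x
        simp only [Finset.mem_erase, Finset.mem_sdiff]
        tauto
      rw [he]
      have h3 : ∑ i ∈ (G'.erase il) \ δ, min (D i) R ≤ ∑ i ∈ (G'.erase il) \ δ, D i :=
        Finset.sum_le_sum fun i _ => min_le_left _ _
      have h4 : min (D il) R ≤ R := min_le_right _ _
      linarith
    have hlow : R ≤ ∑ i ∈ Gstar \ δ, min (D i) R := by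
      by_cases hex : ∃ i ∈ Gstar \ δ, R ≤ D i
      · obtain ⟨i, hi, hRi⟩ := hex
        calc R = min (D i) R := (min_eq_right hRi).symm
          _ ≤ _ := Finset.single_le_sum (f := fun i => min (D i) R)
            (fun j hj => le_min (hD j (hGK (Finset.mem_sdiff.1 hj).1)) hRpos.le) hi
      · push Not at hex
        rw [Finset.sum_congr rfl fun i hi => min_eq_left (hex i hi).le]
        have h5 : ∑ i ∈ Gstar, D i ≤ ∑ i ∈ (Gstar \ δ) ∪ δ, D i := by
          refine Finset.sum_le_sum_of_subset_of_nonneg ?_ ?_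
          · intro x hx
            simp only [Finset.mem_union, Finset.mem_sdiff]
            tauto
          · intro j hj _
            rcases Finset.mem_union.1 hj with h | h
            · exact hD j (hGK (Finset.mem_sdiff.1 h).1)
            · exact hD j (hδK h)
        rw [Finset.sum_union Finset.sdiff_disjoint] at h5
        linarith
    have := mul_le_mul_of_nonneg_left (show ∑ i ∈ G' \ δ, min (D i) R ≤
      2 * ∑ i ∈ Gstar \ δ, min (D i) R by linarith) (hy δ hδ)
    linarith
  rw [hchatsum, hchatsum] at hkey
  have h6 := mul_le_mul_of_nonneg_left hτ1 hb
  have h7 := mul_le_mul_of_nonneg_left hτ2 hb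
  have h8 : 0 ≤ a * ∑ i ∈ Gstar, c i :=
    mul_nonneg ha (Finset.sum_nonneg fun i hi => hc i (hGK hi))
  rw [mul_add]
  linarith
end
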